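/- (a) For H ∈ ℂ(X,Y,t) written as A/B with A, B coprime polynomials, and for any (u,v) in the orbit 𝒪, the evaluation H(u,v,1/S(x,y)) is a well-defined element of 𝕂 (i.e. B(u,v,1/S(x,y)) ≠ 0) if and only if H is regular, i.e. K̃ does not divide B. (b) The kernel of the ℂ-algebra homomorphism ℂ[X,Y,t] → 𝕂 sending X ↦ x, Y ↦ y, t ↦ 1/S(x,y) is the principal ideal generated by K̃, and the induced isomorphism of the field of equivalence classes of regular fractions modulo K̃ onto k(x,y) maps ℂ(t) onto k, ℂ(X,t) onto k(x) and ℂ(Y,t) onto k(y). -/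

import Mathlib

open IntermediateField
open scoped BigOperators Classical

set_option synthInstance.maxHeartbeats 1000000
set_option maxHeartbeats 1600000

noncomputable section

namespace QuadrantWalk

variable {K : Type} [Field K] [Algebra ℂ K]

/-- Evaluation of the step (Laurent) polynomial `S(X,Y) = ∑ w_{i,j} X^i Y^j`
    at a pair of elements of a field. -/
def stepEval (St : Finset (ℤ × ℤ)) (w : ℤ × ℤ → ℂ) (u v : K) : K :=
  ∑ p ∈ St, algebraMap ℂ K (w p) * u ^ p.1 * v ^ p.2

/-- The step polynomial involves both `X` and `Y`. -/
def NotUnivariate (St : Finset (ℤ × ℤ)) : Prop :=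
  (∃ p ∈ St, ∃ q ∈ St, p.1 ≠ q.1) ∧ ∃ p ∈ St, ∃ q ∈ St, p.2 ≠ q.2

/-- The kernel polynomial `K̃(X,Y,t) = X^mx * Y^my * (1 - t·S(X,Y))` as an element of
`ℂ[X,Y,t]`, with variables `0 ↦ X`, `1 ↦ Y`, `2 ↦ t`. -/
def kernelPoly (St : Finset (ℤ × ℤ)) (w : ℤ × ℤ → ℂ) (mx my : ℕ) :
    MvPolynomial (Fin 3) ℂ :=
  MvPolynomial.X 0 ^ mx * MvPolynomial.X 1 ^ my -
    MvPolynomial.X 2 *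
      ∑ p ∈ St, MvPolynomial.C (w p) *
        MvPolynomial.X 0 ^ (p.1 + (mx : ℤ)).toNat *
        MvPolynomial.X 1 ^ (p.2 + (my : ℤ)).toNat

/-- `-mx` (resp. `-my`) is the smallest `X`-exponent (resp. `Y`-exponent) of the model. -/
structure ExponentBounds (St : Finset (ℤ × ℤ)) (mx my : ℕ) : Prop where
  lowerX : ∀ p ∈ St, -(mx : ℤ) ≤ p.1
  lowerY : ∀ p ∈ St, -(my : ℤ) ≤ p.2
  attainX : ∃ p ∈ St, p.1 = -(mx : ℤ)
  attainY : ∃ p ∈ St, p.2 = -(my : ℤ)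

/-- `x`-adjacency : equal first coordinates and equal values of `S`. -/
def XAdj (St : Finset (ℤ × ℤ)) (w : ℤ × ℤ → ℂ) (a b : K × K) : Prop :=
  a.1 = b.1 ∧ stepEval St w a.1 a.2 = stepEval St w b.1 b.2

/-- `y`-adjacency : equal second coordinates and equal values of `S`. -/
def YAdj (St : Finset (ℤ × ℤ)) (w : ℤ × ℤ → ℂ) (a b : K × K) : Prop :=
  a.2 = b.2 ∧ stepEval St w a.1 a.2 = stepEval St w b.1 b.2

/-- Adjacency. -/
def Adj (St : Finset (ℤ × ℤ)) (w : ℤ × ℤ → ℂ) (a b : K × K) : Prop :=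
  XAdj St w a b ∨ YAdj St w a b

/-- The orbit of the walk: the equivalence class of `(x,y)` under the
reflexive-transitive closure of adjacency. -/
def orbit (St : Finset (ℤ × ℤ)) (w : ℤ × ℤ → ℂ) (x y : K) : Set (K × K) :=
  {a | Relation.ReflTransGen (Adj St w) (x, y) a}

/-- `k = ℂ(S(x,y))`. -/
def kF (St : Finset (ℤ × ℤ)) (w : ℤ × ℤ → ℂ) (x y : K) : IntermediateField ℂ K :=
  adjoin ℂ {stepEval St w x y}

/-- `k(x) = ℂ(x, S(x,y))`. -/
def kxF (St : Finset (ℤ × ℤ)) (w : ℤ × ℤ → ℂ) (x y : K) : IntermediateField ℂ K :=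
  adjoin ℂ {x, stepEval St w x y}

/-- `k(y) = ℂ(y, S(x,y))`. -/
def kyF (St : Finset (ℤ × ℤ)) (w : ℤ × ℤ → ℂ) (x y : K) : IntermediateField ℂ K :=
  adjoin ℂ {y, stepEval St w x y}

/-- `k(x,y) = ℂ(x,y)`. -/
def kxyF (x y : K) : IntermediateField ℂ K := adjoin ℂ {x, y}

/-- `k(𝒪)`: the subfield generated over `k` by all coordinates of the orbit. -/
def orbitF (St : Finset (ℤ × ℤ)) (w : ℤ × ℤ → ℂ) (x y : K) : IntermediateField ℂ K :=
  adjoin ℂ ({stepEval St w x y} ∪ {z | ∃ a ∈ orbit St w x y, z = a.1 ∨ z = a.2})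

/-- The standing hypotheses: nonzero weights, a non-univariate step polynomial,
`x, y` algebraically independent over `ℂ`, and `𝕂` an algebraic closure of `ℂ(x,y)`. -/
structure Setting (St : Finset (ℤ × ℤ)) (w : ℤ × ℤ → ℂ) (x y : K) : Prop where
  weight_ne : ∀ p ∈ St, w p ≠ 0
  notUniv : NotUnivariate St
  indep : AlgebraicIndependent ℂ ![x, y]
  algClosed : IsAlgClosed K
  algebraic : Algebra.IsAlgebraic (kxyF x y) K

lemma self_mem_orbit (St : Finset (ℤ × ℤ)) (w : ℤ × ℤ → ℂ) (x y : K) :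
    (x, y) ∈ orbit St w x y := Relation.ReflTransGen.refl

lemma x_mem_orbitF (St : Finset (ℤ × ℤ)) (w : ℤ × ℤ → ℂ) (x y : K) :
    x ∈ orbitF St w x y := by
  apply subset_adjoin
  exact Set.mem_union_right _ ⟨(x, y), self_mem_orbit St w x y, Or.inl rfl⟩

lemma y_mem_orbitF (St : Finset (ℤ × ℤ)) (w : ℤ × ℤ → ℂ) (x y : K) :
    y ∈ orbitF St w x y := by
  apply subset_adjoin
  exact Set.mem_union_right _ ⟨(x, y), self_mem_orbit St w x y, Or.inr rfl⟩

lemma S_mem_orbitF (St : Finset (ℤ × ℤ)) (w : ℤ × ℤ → ℂ) (x y : K) :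
    stepEval St w x y ∈ orbitF St w x y := by
  apply subset_adjoin
  exact Set.mem_union_left _ rfl

lemma x_mem_kxF (St : Finset (ℤ × ℤ)) (w : ℤ × ℤ → ℂ) (x y : K) :
    x ∈ kxF St w x y :=
  subset_adjoin ℂ _ (Set.mem_insert _ _)

lemma S_mem_kxF (St : Finset (ℤ × ℤ)) (w : ℤ × ℤ → ℂ) (x y : K) :
    stepEval St w x y ∈ kxF St w x y :=
  subset_adjoin ℂ _ (Set.mem_insert_of_mem _ rfl)

lemma y_mem_kyF (St : Finset (ℤ × ℤ)) (w : ℤ × ℤ → ℂ) (x y : K) :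
    y ∈ kyF St w x y :=
  subset_adjoin ℂ _ (Set.mem_insert _ _)

lemma S_mem_kyF (St : Finset (ℤ × ℤ)) (w : ℤ × ℤ → ℂ) (x y : K) :
    stepEval St w x y ∈ kyF St w x y :=
  subset_adjoin ℂ _ (Set.mem_insert_of_mem _ rfl)

/-- The subgroup of `ℂ`-automorphisms of `M` fixing the subfield `E` pointwise. -/
def fixingAuts (E M : IntermediateField ℂ K) : Subgroup (↥M ≃ₐ[ℂ] ↥M) where
  carrier := {σ | ∀ (z : K) (_ : z ∈ E) (hzM : z ∈ M), σ ⟨z, hzM⟩ = ⟨z, hzM⟩}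
  one_mem' := fun _ _ _ => rfl
  mul_mem' := by
    intro σ τ hσ hτ z hzE hzM
    show σ (τ ⟨z, hzM⟩) = ⟨z, hzM⟩
    rw [hτ z hzE hzM, hσ z hzE hzM]
  inv_mem' := by
    intro σ hσ z hzE hzM
    show σ.symm ⟨z, hzM⟩ = ⟨z, hzM⟩
    conv_lhs => rw [← hσ z hzE hzM]
    exact σ.symm_apply_apply _

/-- The Galois group `G_x = Gal(k(𝒪)|k(x))`. -/
def Gx (St : Finset (ℤ × ℤ)) (w : ℤ × ℤ → ℂ) (x y : K) :
    Subgroup (↥(orbitF St w x y) ≃ₐ[ℂ] ↥(orbitF St w x y)) :=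
  fixingAuts (kxF St w x y) (orbitF St w x y)

/-- The Galois group `G_y = Gal(k(𝒪)|k(y))`. -/
def Gy (St : Finset (ℤ × ℤ)) (w : ℤ × ℤ → ℂ) (x y : K) :
    Subgroup (↥(orbitF St w x y) ≃ₐ[ℂ] ↥(orbitF St w x y)) :=
  fixingAuts (kyF St w x y) (orbitF St w x y)

/-- The Galois group `G_{xy} = Gal(k(𝒪)|k(x,y))`. -/
def Gxy (St : Finset (ℤ × ℤ)) (w : ℤ × ℤ → ℂ) (x y : K) :
    Subgroup (↥(orbitF St w x y) ≃ₐ[ℂ] ↥(orbitF St w x y)) :=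
  fixingAuts (kxyF x y) (orbitF St w x y)

/-- Extend an automorphism of an intermediate field to a map on all of `K`
(by the identity outside). -/
def extendAut {M : IntermediateField ℂ K} (σ : ↥M ≃ₐ[ℂ] ↥M) (z : K) : K :=
  if h : z ∈ M then (σ ⟨z, h⟩ : K) else z

/-- The coordinate-wise action of an automorphism on a `0`-chain. -/
def actChain {M : IntermediateField ℂ K} (σ : ↥M ≃ₐ[ℂ] ↥M)
    (γ : (K × K) →₀ ℂ) : (K × K) →₀ ℂ :=
  Finsupp.mapDomain (Prod.map (extendAut σ) (extendAut σ)) γ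

/-- Evaluation of a polynomial `P(X,Y,t)` at `(u, v, 1/S(x,y))` for `(u,v) = a`. -/
def evalPt (St : Finset (ℤ × ℤ)) (w : ℤ × ℤ → ℂ) (x y : K)
    (P : MvPolynomial (Fin 3) ℂ) (a : K × K) : K :=
  MvPolynomial.aeval ![a.1, a.2, (stepEval St w x y)⁻¹] P

/-- Evaluation of a polynomial `P(X,Y,t)` at `(x, y, 1/S(x,y))`. -/
def evalXY (St : Finset (ℤ × ℤ)) (w : ℤ × ℤ → ℂ) (x y : K)
    (P : MvPolynomial (Fin 3) ℂ) : K :=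
  evalPt St w x y P (x, y)

/-- Evaluation of the fraction `A/B` at `(a.1, a.2, 1/S(x,y))`. -/
def fracEval (St : Finset (ℤ × ℤ)) (w : ℤ × ℤ → ℂ) (x y : K)
    (A B : MvPolynomial (Fin 3) ℂ) (a : K × K) : K :=
  evalPt St w x y A a / evalPt St w x y B a

/-- Evaluation (orbit sum) of the fraction `A/B` on a `0`-chain. -/
def chainEval (St : Finset (ℤ × ℤ)) (w : ℤ × ℤ → ℂ) (x y : K)
    (A B : MvPolynomial (Fin 3) ℂ) (γ : (K × K) →₀ ℂ) : K :=
  γ.sum fun a c => algebraMap ℂ K c * fracEval St w x y A B a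

/-- A `0`-chain cancels decoupled fractions: the orbit sum of every regular fraction
of the form `F(X,t) + G(Y,t)` on it vanishes. -/
def CancelsDecoupled (St : Finset (ℤ × ℤ)) (w : ℤ × ℤ → ℂ) (mx my : ℕ)
    (x y : K) (α : (K × K) →₀ ℂ) : Prop :=
  ∀ A₁ B₁ A₂ B₂ : MvPolynomial (Fin 3) ℂ,
    A₁ ∈ MvPolynomial.supported ℂ ({0, 2} : Set (Fin 3)) →
    B₁ ∈ MvPolynomial.supported ℂ ({0, 2} : Set (Fin 3)) →
    A₂ ∈ MvPolynomial.supported ℂ ({1, 2} : Set (Fin 3)) →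
    B₂ ∈ MvPolynomial.supported ℂ ({1, 2} : Set (Fin 3)) →
    ¬ kernelPoly St w mx my ∣ B₁ → ¬ kernelPoly St w mx my ∣ B₂ →
    (α.sum fun a c =>
      algebraMap ℂ K c * (fracEval St w x y A₁ B₁ a + fracEval St w x y A₂ B₂ a)) = 0

/-- The field of fractions `ℂ(X,Y,t)`. -/
abbrev FF : Type := FractionRing (MvPolynomial (Fin 3) ℂ)

/-- The inclusion of `ℂ[X,Y,t]` into `ℂ(X,Y,t)`. -/
def toFF (P : MvPolynomial (Fin 3) ℂ) : FF := algebraMap (MvPolynomial (Fin 3) ℂ) FF P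

/-- The regular fraction `A/B` admits a Galois decoupling:
`A/B = F + G + K̃·R` with `F ∈ ℂ(X,t)`, `G ∈ ℂ(Y,t)` and `R` regular. -/
def AdmitsDecoupling (St : Finset (ℤ × ℤ)) (w : ℤ × ℤ → ℂ) (mx my : ℕ)
    (A B : MvPolynomial (Fin 3) ℂ) : Prop :=
  ∃ F₁ F₂ G₁ G₂ R₁ R₂ : MvPolynomial (Fin 3) ℂ,
    F₁ ∈ MvPolynomial.supported ℂ ({0, 2} : Set (Fin 3)) ∧
    F₂ ∈ MvPolynomial.supported ℂ ({0, 2} : Set (Fin 3)) ∧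
    G₁ ∈ MvPolynomial.supported ℂ ({1, 2} : Set (Fin 3)) ∧
    G₂ ∈ MvPolynomial.supported ℂ ({1, 2} : Set (Fin 3)) ∧
    ¬ kernelPoly St w mx my ∣ F₂ ∧ ¬ kernelPoly St w mx my ∣ G₂ ∧
    ¬ kernelPoly St w mx my ∣ R₂ ∧
    toFF A / toFF B =
      toFF F₁ / toFF F₂ + toFF G₁ / toFF G₂ +
        toFF (kernelPoly St w mx my) * (toFF R₁ / toFF R₂)

/-- `(I, J) = (A/B, Cc/D)` is a pair of Galois invariants: `I - J = K̃·R` with `R` regular. -/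
def IsInvariantPair (St : Finset (ℤ × ℤ)) (w : ℤ × ℤ → ℂ) (mx my : ℕ)
    (A B Cc D : MvPolynomial (Fin 3) ℂ) : Prop :=
  ∃ R₁ R₂ : MvPolynomial (Fin 3) ℂ, ¬ kernelPoly St w mx my ∣ R₂ ∧
    toFF A / toFF B - toFF Cc / toFF D =
      toFF (kernelPoly St w mx my) * (toFF R₁ / toFF R₂)

/-- A constant pair of Galois invariants: both members are equivalent to a
common fraction `c ∈ ℂ(t)` modulo `K̃`. -/
def IsConstantPair (St : Finset (ℤ × ℤ)) (w : ℤ × ℤ → ℂ) (mx my : ℕ)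
    (A B Cc D : MvPolynomial (Fin 3) ℂ) : Prop :=
  IsInvariantPair St w mx my A B Cc D ∧
  ∃ c₁ c₂ : MvPolynomial (Fin 3) ℂ,
    c₁ ∈ MvPolynomial.supported ℂ ({2} : Set (Fin 3)) ∧
    c₂ ∈ MvPolynomial.supported ℂ ({2} : Set (Fin 3)) ∧ c₂ ≠ 0 ∧
    IsInvariantPair St w mx my A B c₁ c₂ ∧ IsInvariantPair St w mx my Cc D c₁ c₂

/-- `(γx, γy)` is a pseudo-decoupling of `(x,y)`. -/
def PseudoDecoupling (St : Finset (ℤ × ℤ)) (w : ℤ × ℤ → ℂ) (mx my : ℕ)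
    (x y : K) (γx γy : (K × K) →₀ ℂ) : Prop :=
  ∀ A B : MvPolynomial (Fin 3) ℂ, ¬ kernelPoly St w mx my ∣ B →
    AdmitsDecoupling St w mx my A B →
      fracEval St w x y A B (x, y) =
          chainEval St w x y A B γx + chainEval St w x y A B γy ∧
        chainEval St w x y A B γx ∈ kxF St w x y ∧
        chainEval St w x y A B γy ∈ kyF St w x y

/-- `(gx, gy, a)` is a decoupling of `(x,y)` in the orbit. -/
def IsDecoupling (St : Finset (ℤ × ℤ)) (w : ℤ × ℤ → ℂ) (mx my : ℕ)
    (x y : K) (gx gy a : (K × K) →₀ ℂ) : Prop :=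
  Finsupp.single (x, y) (1 : ℂ) = gx + gy + a ∧
  (∀ σ ∈ Gx St w x y, actChain σ gx = gx) ∧
  (∀ σ ∈ Gy St w x y, actChain σ gy = gy) ∧
  CancelsDecoupled St w mx my x y a

/-- The `x`-part of the boundary of a `1`-chain. -/
def boundaryX (St : Finset (ℤ × ℤ)) (w : ℤ × ℤ → ℂ)
    (c : ((K × K) × (K × K)) →₀ ℂ) : (K × K) →₀ ℂ :=
  c.sum fun e coeff =>
    if XAdj St w e.1 e.2 then
      coeff • (Finsupp.single e.2 (1 : ℂ) - Finsupp.single e.1 (1 : ℂ)) else 0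

/-- The `y`-part of the boundary of a `1`-chain. -/
def boundaryY (St : Finset (ℤ × ℤ)) (w : ℤ × ℤ → ℂ)
    (c : ((K × K) × (K × K)) →₀ ℂ) : (K × K) →₀ ℂ :=
  c.sum fun e coeff =>
    if YAdj St w e.1 e.2 then
      coeff • (Finsupp.single e.2 (1 : ℂ) - Finsupp.single e.1 (1 : ℂ)) else 0

/-- The `0`-chain induced by a bicolored loop. -/
def IsBicoloredChain (St : Finset (ℤ × ℤ)) (w : ℤ × ℤ → ℂ) (x y : K)
    (α : (K × K) →₀ ℂ) : Prop :=
  ∃ (n : ℕ) (b : ℕ → K × K), 0 < n ∧ b (2 * n) = b 0 ∧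
    (∀ j < 2 * n, b j ∈ orbit St w x y) ∧
    (∀ i < n, XAdj St w (b (2 * i)) (b (2 * i + 1)) ∧
      YAdj St w (b (2 * i + 1)) (b (2 * i + 2))) ∧
    α = ∑ j ∈ Finset.range (2 * n), ((-1 : ℂ) ^ (j + 1)) • Finsupp.single (b j) (1 : ℂ)

/-- The `0`-chain `ω = (1/|𝒪|) ∑_{a ∈ 𝒪} a`. -/
def omegaChain (St : Finset (ℤ × ℤ)) (w : ℤ × ℤ → ℂ) (x y : K)
    (h : (orbit St w x y).Finite) : (K × K) →₀ ℂ :=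
  ((h.toFinset.card : ℂ))⁻¹ • ∑ a ∈ h.toFinset, Finsupp.single a (1 : ℂ)

/-- The average `[G]·γ = (1/|G|) ∑_{σ ∈ G} σ·γ` of a `0`-chain under a group. -/
def groupAverage {M : IntermediateField ℂ K} (G : Subgroup (↥M ≃ₐ[ℂ] ↥M))
    (γ : (K × K) →₀ ℂ) : (K × K) →₀ ℂ :=
  ((Nat.card G : ℂ))⁻¹ • ∑ᶠ σ ∈ (G : Set (↥M ≃ₐ[ℂ] ↥M)), actChain σ γ

/-- `ℂ[X,t]` (two variables: `0` and `1`). -/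
abbrev MvP2 : Type := MvPolynomial (Fin 2) ℂ

/-- `ℂ(X,t)`, the fraction field of `ℂ[X,t]`. -/
abbrev CXt : Type := FractionRing MvP2

/-- Constants `ℂ → ℂ(X,t)`. -/
def cconst : ℂ →+* CXt := (algebraMap MvP2 CXt).comp (MvPolynomial.C)

/-- The first generator of `ℂ(X,t)`. -/
def gen0 : CXt := algebraMap MvP2 CXt (MvPolynomial.X 0)

/-- The second generator of `ℂ(X,t)`. -/
def gen1 : CXt := algebraMap MvP2 CXt (MvPolynomial.X 1)

/-- The kernel polynomial viewed as a polynomial in `Y` over `ℂ(X,t)`. -/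
def kernelInY (St : Finset (ℤ × ℤ)) (w : ℤ × ℤ → ℂ) (mx my : ℕ) :
    Polynomial CXt :=
  MvPolynomial.eval₂ ((Polynomial.C : CXt →+* Polynomial CXt).comp cconst)
    ![Polynomial.C gen0, Polynomial.X, Polynomial.C gen1]
    (kernelPoly St w mx my)

/-- The kernel polynomial viewed as a polynomial in `X` over `ℂ(Y,t)`. -/
def kernelInX (St : Finset (ℤ × ℤ)) (w : ℤ × ℤ → ℂ) (mx my : ℕ) :
    Polynomial CXt :=
  MvPolynomial.eval₂ ((Polynomial.C : CXt →+* Polynomial CXt).comp cconst)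
    ![Polynomial.X, Polynomial.C gen0, Polynomial.C gen1]
    (kernelPoly St w mx my)

/-- The kernel polynomial viewed as a polynomial in `X, Y` over `ℂ(t)`. -/
def kernelInXY (St : Finset (ℤ × ℤ)) (w : ℤ × ℤ → ℂ) (mx my : ℕ) :
    MvPolynomial (Fin 2) (RatFunc ℂ) :=
  MvPolynomial.eval₂
    ((MvPolynomial.C : RatFunc ℂ →+* MvPolynomial (Fin 2) (RatFunc ℂ)).comp
      (RatFunc.C : ℂ →+* RatFunc ℂ))
    ![MvPolynomial.X 0, MvPolynomial.X 1, MvPolynomial.C RatFunc.X]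
    (kernelPoly St w mx my)

/-- The specialization `K̃(x, Y, 1/S(x,y))` as a polynomial in `Y` over `k(x)`. -/
def kernelAtX (St : Finset (ℤ × ℤ)) (w : ℤ × ℤ → ℂ) (mx my : ℕ) (x y : K) :
    Polynomial ↥(kxF St w x y) :=
  MvPolynomial.aeval
    ![Polynomial.C (⟨x, x_mem_kxF St w x y⟩ : kxF St w x y), Polynomial.X,
      Polynomial.C (⟨(stepEval St w x y)⁻¹, inv_mem (S_mem_kxF St w x y)⟩ : kxF St w x y)]
    (kernelPoly St w mx my)

/-- The specialization `K̃(X, y, 1/S(x,y))` as a polynomial in `X` over `k(y)`. -/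
def kernelAtY (St : Finset (ℤ × ℤ)) (w : ℤ × ℤ → ℂ) (mx my : ℕ) (x y : K) :
    Polynomial ↥(kyF St w x y) :=
  MvPolynomial.aeval
    ![Polynomial.X, Polynomial.C (⟨y, y_mem_kyF St w x y⟩ : kyF St w x y),
      Polynomial.C (⟨(stepEval St w x y)⁻¹, inv_mem (S_mem_kyF St w x y)⟩ : kyF St w x y)]
    (kernelPoly St w mx my)

/-- Values of regular fractions with numerator and denominator supported on a set
of variables. -/
def regRange (St : Finset (ℤ × ℤ)) (w : ℤ × ℤ → ℂ) (x y : K) (mx my : ℕ)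
    (s : Set (Fin 3)) : Set K :=
  {z | ∃ A B : MvPolynomial (Fin 3) ℂ,
    A ∈ MvPolynomial.supported ℂ s ∧ B ∈ MvPolynomial.supported ℂ s ∧
    ¬ kernelPoly St w mx my ∣ B ∧ z = evalXY St w x y A / evalXY St w x y B}

end QuadrantWalk
namespace QuadrantWalk

lemma algebraicIndependent_pair_iff {K : Type} [Field K] [Algebra ℂ K] (u v : K) :
    AlgebraicIndependent ℂ ![u, v] ↔
      Transcendental ℂ u ∧ Transcendental (Algebra.adjoin ℂ ({u} : Set K)) v := by
  have h := AlgebraicIndependent.option_iff (R := ℂ) (x := fun _ : Unit => u) (a := v)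
  rw [Set.range_const, algebraicIndependent_unique_type_iff (x := fun _ : Unit => u)] at h
  rw [← h, ← algebraicIndependent_equiv (finSuccEquiv' (1 : Fin 2)
    |>.trans (Equiv.optionCongr (Equiv.ofUnique (Fin 1) Unit)))]
  have : ((fun o : Option Unit => o.elim v fun _ => u) ∘
      (finSuccEquiv' (1 : Fin 2) |>.trans (Equiv.optionCongr (Equiv.ofUnique (Fin 1) Unit)))) =
      ![u, v] := by
    funext i
    fin_cases i
    · have : finSuccEquiv' (1 : Fin 2) 0 = some 0 := by decide
      simp [this]
    · simp
  rw [this]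

lemma algebraicIndependent_pair_swap {K : Type} [Field K] [Algebra ℂ K] {u v : K}
    (h : AlgebraicIndependent ℂ ![u, v]) : AlgebraicIndependent ℂ ![v, u] := by
  rw [← algebraicIndependent_equiv (Equiv.swap (0 : Fin 2) 1)] at h
  convert h using 1
  funext i
  fin_cases i <;> simp

lemma isAlgebraic_stepEval {K : Type} [Field K] [Algebra ℂ K]
    (St : Finset (ℤ × ℤ)) (w : ℤ × ℤ → ℂ) {u v : K}
    (hv : IsAlgebraic (Algebra.adjoin ℂ ({u} : Set K)) v) :
    IsAlgebraic (Algebra.adjoin ℂ ({u} : Set K)) (stepEval St w u v) := by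
  have hz : ∀ (z : K) (n : ℤ), IsAlgebraic (Algebra.adjoin ℂ ({u} : Set K)) z →
      IsAlgebraic (Algebra.adjoin ℂ ({u} : Set K)) (z ^ n) := by
    intro z n h
    cases n with
    | ofNat n => simpa using h.pow n
    | negSucc n => simpa [zpow_negSucc] using (h.pow (n + 1)).inv
  have hu : IsAlgebraic (Algebra.adjoin ℂ ({u} : Set K)) u :=
    isAlgebraic_algebraMap (⟨u, Algebra.self_mem_adjoin_singleton ℂ u⟩ :
      Algebra.adjoin ℂ ({u} : Set K))
  unfold stepEval
  refine sum_mem (S := Subalgebra.algebraicClosure (Algebra.adjoin ℂ ({u} : Set K)) K)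
    fun p _ => ?_
  refine (IsAlgebraic.mul ?_ (hz u _ hu)).mul (hz v _ hv)
  exact isAlgebraic_algebraMap (algebraMap ℂ (Algebra.adjoin ℂ ({u} : Set K)) (w p))

/-- A Laurent polynomial with a nonzero coefficient does not vanish at a transcendental. -/
lemma sum_zpow_ne_zero {K : Type} [Field K] [Algebra ℂ K] {u : K} (hu : Transcendental ℂ u)
    (s : Finset ℤ) (c : ℤ → ℂ) {i : ℤ} (hi : i ∈ s) (hc : c i ≠ 0) :
    ∑ j ∈ s, algebraMap ℂ K (c j) * u ^ j ≠ 0 := by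
  intro h0
  have hu0 : u ≠ 0 := fun h => hu (h ▸ isAlgebraic_zero)
  obtain ⟨m, hm⟩ : ∃ m : ℕ, ∀ j ∈ s, 0 ≤ j + m := by
    obtain ⟨b, hb⟩ := s.bddBelow
    exact ⟨b.natAbs, fun j hj => by have := hb hj; omega⟩
  refine hu ⟨∑ j ∈ s, Polynomial.C (c j) * Polynomial.X ^ (j + m).toNat, fun h => ?_, ?_⟩
  · apply hc
    have := congrArg (fun P => Polynomial.coeff P (i + m).toNat) h
    simp only [Polynomial.finsetSum_coeff, Polynomial.coeff_C_mul, Polynomial.coeff_X_pow,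
      Polynomial.coeff_zero] at this
    rw [Finset.sum_eq_single i] at this
    · simpa using this
    · intro j hj hji
      have h1 := hm j hj
      have h2 := hm i hi
      rw [if_neg (by omega), mul_zero]
    · exact fun h => absurd hi h
  · have : ∑ j ∈ s, algebraMap ℂ K (c j) * u ^ (j + m).toNat =
        (∑ j ∈ s, algebraMap ℂ K (c j) * u ^ j) * u ^ m := by
      rw [Finset.sum_mul]
      refine Finset.sum_congr rfl fun j hj => ?_
      rw [← zpow_natCast u (j + m).toNat, Int.toNat_of_nonneg (hm j hj), zpow_add₀ hu0,
        zpow_natCast, mul_assoc]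
    simp [this, h0]

lemma isAlgebraic_of_stepEval {K : Type} [Field K] [Algebra ℂ K]
    {St : Finset (ℤ × ℤ)} {w : ℤ × ℤ → ℂ} (hw : ∀ p ∈ St, w p ≠ 0)
    (hS : ∃ p ∈ St, p.2 ≠ 0) {u v : K} (hu : Transcendental ℂ u)
    (h : IsAlgebraic (Algebra.adjoin ℂ ({u} : Set K)) (stepEval St w u v)) :
    IsAlgebraic (Algebra.adjoin ℂ ({u} : Set K)) v := by
  by_cases hv0 : v = 0
  · exact hv0 ▸ isAlgebraic_zero
  set A := Algebra.adjoin ℂ ({u} : Set K)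
  obtain ⟨p, hp, hp0⟩ := hS
  obtain ⟨m, hm⟩ : ∃ m : ℕ, ∀ q ∈ St, 0 ≤ q.2 + m := by
    obtain ⟨b, hb⟩ := (St.image Prod.snd).bddBelow
    exact ⟨b.natAbs, fun q hq => by
      have := hb (Finset.mem_coe.2 (Finset.mem_image_of_mem Prod.snd hq)); omega⟩
  let L := Subalgebra.algebraicClosure A K
  have hz : ∀ (n : ℤ), IsAlgebraic A (u ^ n) := by
    have hu : IsAlgebraic A u :=
      isAlgebraic_algebraMap (⟨u, Algebra.self_mem_adjoin_singleton ℂ u⟩ : A)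
    intro n
    cases n with
    | ofNat n => simpa using hu.pow n
    | negSucc n => simpa [zpow_negSucc] using (hu.pow (n + 1)).inv
  let cf : ℤ × ℤ → L := fun q => ⟨algebraMap ℂ K (w q) * u ^ q.1,
    (isAlgebraic_algebraMap (algebraMap ℂ A (w q))).mul (hz q.1)⟩
  let sL : L := ⟨stepEval St w u v, h⟩
  suffices IsAlgebraic L v from this.restrictScalars A
  refine ⟨∑ q ∈ St, Polynomial.C (cf q) * Polynomial.X ^ (q.2 + m).toNat -
    Polynomial.C sL * Polynomial.X ^ m, fun h0 => ?_, ?_⟩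
  · have h1 := congrArg (fun P => Polynomial.coeff P (p.2 + m).toNat) h0
    have hpm := hm p hp
    simp only [Polynomial.finsetSum_coeff, Polynomial.coeff_C_mul, Polynomial.coeff_X_pow,
      Polynomial.coeff_zero, Polynomial.coeff_sub] at h1
    rw [if_neg (by omega : ¬ (p.2 + (m : ℤ)).toNat = m), mul_zero, sub_zero] at h1
    have h2 : ∑ q ∈ St with q.2 = p.2, algebraMap ℂ K (w q) * u ^ q.1 = 0 := by
      rw [Finset.sum_filter]
      have h3 := congrArg (algebraMap L K) h1
      rw [map_sum, map_zero] at h3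
      refine Eq.trans ?_ h3
      refine Finset.sum_congr rfl fun q hq => ?_
      have hqm := hm q hq
      by_cases hq2 : q.2 = p.2
      · simp only [hq2, if_true, mul_one]
        rfl
      · rw [if_neg hq2, if_neg (by omega), mul_zero, map_zero]
    refine sum_zpow_ne_zero hu ((St.filter fun q => q.2 = p.2).image Prod.fst)
      (fun i => w (i, p.2)) (i := p.1)
      (Finset.mem_image_of_mem _ (Finset.mem_filter.2 ⟨hp, rfl⟩)) (hw p hp) ?_
    rw [Finset.sum_image, ← h2]
    · refine Finset.sum_congr rfl fun q hq => ?_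
      rw [← (Finset.mem_filter.1 hq).2]
    · intro a ha b hb hab
      exact Prod.ext hab ((Finset.mem_filter.1 ha).2.trans (Finset.mem_filter.1 hb).2.symm)
  · have h1 : ∑ q ∈ St, algebraMap ℂ K (w q) * u ^ q.1 * v ^ (q.2 + m).toNat =
        stepEval St w u v * v ^ m := by
      rw [stepEval, Finset.sum_mul]
      refine Finset.sum_congr rfl fun q hq => ?_
      rw [← zpow_natCast v (q.2 + m).toNat, Int.toNat_of_nonneg (hm q hq), zpow_add₀ hv0,
        zpow_natCast, mul_assoc _ (v ^ q.2)]
    have e1 : ∀ q, algebraMap L K (cf q) = algebraMap ℂ K (w q) * u ^ q.1 := fun _ => rfl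
    have e2 : algebraMap L K sL = stepEval St w u v := rfl
    simp only [map_sub, map_sum, map_mul, Polynomial.aeval_C, map_pow, Polynomial.aeval_X, e1, e2,
      h1, sub_self]

lemma transcendental_stepEval {K : Type} [Field K] [Algebra ℂ K]
    {St : Finset (ℤ × ℤ)} {w : ℤ × ℤ → ℂ} (hw : ∀ p ∈ St, w p ≠ 0)
    (hS : ∃ p ∈ St, p.2 ≠ 0) {u v : K} (h : AlgebraicIndependent ℂ ![u, v]) :
    Transcendental (Algebra.adjoin ℂ ({u} : Set K)) (stepEval St w u v) := by
  rw [algebraicIndependent_pair_iff] at h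
  exact fun ha => h.2 (isAlgebraic_of_stepEval hw hS h.1 ha)

lemma stepEval_ne_zero {K : Type} [Field K] [Algebra ℂ K]
    {St : Finset (ℤ × ℤ)} {w : ℤ × ℤ → ℂ} (hw : ∀ p ∈ St, w p ≠ 0)
    (hS : ∃ p ∈ St, p.2 ≠ 0) {u v : K} (h : AlgebraicIndependent ℂ ![u, v]) :
    stepEval St w u v ≠ 0 :=
  fun h0 => transcendental_stepEval hw hS h (h0 ▸ isAlgebraic_zero)

lemma algebraicIndependent_of_stepEval_eq {K : Type} [Field K] [Algebra ℂ K]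
    {St : Finset (ℤ × ℤ)} {w : ℤ × ℤ → ℂ} (hw : ∀ p ∈ St, w p ≠ 0)
    (hS : ∃ p ∈ St, p.2 ≠ 0) {u v v' : K} (h : AlgebraicIndependent ℂ ![u, v])
    (he : stepEval St w u v = stepEval St w u v') : AlgebraicIndependent ℂ ![u, v'] := by
  have ht := transcendental_stepEval hw hS h
  rw [algebraicIndependent_pair_iff] at h ⊢
  exact ⟨h.1, fun ha => ht (he ▸ isAlgebraic_stepEval St w ha)⟩

lemma stepEval_swap {K : Type} [Field K] [Algebra ℂ K]
    (St : Finset (ℤ × ℤ)) (w : ℤ × ℤ → ℂ) (u v : K) :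
    stepEval (St.map (Equiv.prodComm ℤ ℤ).toEmbedding) (w ∘ Prod.swap) v u =
      stepEval St w u v := by
  simp [stepEval, mul_right_comm]

lemma orbit_algebraicIndependent {K : Type} [Field K] [Algebra ℂ K]
    {St : Finset (ℤ × ℤ)} {w : ℤ × ℤ → ℂ} {x y : K} (hw : ∀ p ∈ St, w p ≠ 0)
    (hS1 : ∃ p ∈ St, p.1 ≠ 0) (hS2 : ∃ p ∈ St, p.2 ≠ 0)
    (hxy : AlgebraicIndependent ℂ ![x, y]) {a : K × K} (ha : a ∈ orbit St w x y) :
    AlgebraicIndependent ℂ ![a.1, a.2] ∧ stepEval St w a.1 a.2 = stepEval St w x y := by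
  induction ha with
  | refl => exact ⟨hxy, rfl⟩
  | @tail b c _ hbc ih =>
    obtain ⟨ih, hs⟩ := ih
    rcases hbc with ⟨h1, h2⟩ | ⟨h1, h2⟩
    · refine ⟨?_, h2.symm.trans hs⟩
      rw [← h1] at h2 ⊢
      exact algebraicIndependent_of_stepEval_eq hw hS2 ih h2
    · refine ⟨?_, h2.symm.trans hs⟩
      rw [← h1] at h2 ⊢
      rw [← stepEval_swap, ← stepEval_swap St w c.1] at h2
      refine algebraicIndependent_pair_swap (algebraicIndependent_of_stepEval_eq ?_ ?_
        (algebraicIndependent_pair_swap ih) h2)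
      · intro p hp
        obtain ⟨q, hq, rfl⟩ := Finset.mem_map.1 hp
        exact hw q hq
      · obtain ⟨q, hq, hq0⟩ := hS1
        exact ⟨q.swap, Finset.mem_map.2 ⟨q, hq, rfl⟩, hq0⟩

/-- The numerator `X^mx * Y^my * S(X,Y)` of the step polynomial. -/
def stepNumerator (St : Finset (ℤ × ℤ)) (w : ℤ × ℤ → ℂ) (mx my : ℕ) :
    MvPolynomial (Fin 3) ℂ :=
  ∑ p ∈ St, MvPolynomial.C (w p) *
    MvPolynomial.X 0 ^ (p.1 + (mx : ℤ)).toNat *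
    MvPolynomial.X 1 ^ (p.2 + (my : ℤ)).toNat

lemma kernelPoly_eq (St : Finset (ℤ × ℤ)) (w : ℤ × ℤ → ℂ) (mx my : ℕ) :
    kernelPoly St w mx my = MvPolynomial.X 0 ^ mx * MvPolynomial.X 1 ^ my -
      MvPolynomial.X 2 * stepNumerator St w mx my := rfl

lemma coeff_stepNumerator {St : Finset (ℤ × ℤ)} (w : ℤ × ℤ → ℂ) {mx my : ℕ}
    (hb : ExponentBounds St mx my) {p : ℤ × ℤ} (hp : p ∈ St) :
    MvPolynomial.coeff (Finsupp.single 0 (p.1 + (mx : ℤ)).toNat +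
      Finsupp.single 1 (p.2 + (my : ℤ)).toNat) (stepNumerator St w mx my) = w p := by
  rw [stepNumerator, MvPolynomial.coeff_sum, Finset.sum_eq_single p]
  · rw [mul_assoc, MvPolynomial.coeff_C_mul, MvPolynomial.X_pow_eq_monomial,
      MvPolynomial.X_pow_eq_monomial, MvPolynomial.monomial_mul, MvPolynomial.coeff_monomial]
    simp
  · intro q hq hqp
    rw [mul_assoc, MvPolynomial.coeff_C_mul, MvPolynomial.X_pow_eq_monomial,
      MvPolynomial.X_pow_eq_monomial, MvPolynomial.monomial_mul, MvPolynomial.coeff_monomial,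
      if_neg, mul_zero]
    intro h
    apply hqp
    have h0 := DFunLike.congr_fun h 0
    have h1 := DFunLike.congr_fun h 1
    simp at h0 h1
    have := hb.lowerX q hq
    have := hb.lowerX p hp
    have := hb.lowerY q hq
    have := hb.lowerY p hp
    ext <;> omega
  · exact fun h => absurd hp h

lemma X_not_dvd_stepNumerator {St : Finset (ℤ × ℤ)} {w : ℤ × ℤ → ℂ} {mx my : ℕ}
    (hw : ∀ p ∈ St, w p ≠ 0) (hb : ExponentBounds St mx my) :
    ¬ MvPolynomial.X 0 ∣ stepNumerator St w mx my ∧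
      ¬ MvPolynomial.X 1 ∣ stepNumerator St w mx my := by
  constructor
  · rintro ⟨R, hR⟩
    obtain ⟨p, hp, hp0⟩ := hb.attainX
    apply hw p hp
    rw [← coeff_stepNumerator w hb hp, hR, MvPolynomial.coeff_X_mul', if_neg]
    simp [hp0]
  · rintro ⟨R, hR⟩
    obtain ⟨p, hp, hp0⟩ := hb.attainY
    apply hw p hp
    rw [← coeff_stepNumerator w hb hp, hR, MvPolynomial.coeff_X_mul', if_neg]
    simp [hp0]

lemma isRelPrime_kernelPoly {St : Finset (ℤ × ℤ)} {w : ℤ × ℤ → ℂ} {mx my : ℕ}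
    (hw : ∀ p ∈ St, w p ≠ 0) (hb : ExponentBounds St mx my) :
    IsRelPrime (kernelPoly St w mx my) (stepNumerator St w mx my) := by
  have hX : ∀ i : Fin 3, Irreducible (MvPolynomial.X i : MvPolynomial (Fin 3) ℂ) :=
    fun i => (MvPolynomial.X_prime (i := i)).irreducible
  have h := X_not_dvd_stepNumerator hw hb
  have hM : IsRelPrime (MvPolynomial.X 0 ^ mx * MvPolynomial.X 1 ^ my : MvPolynomial (Fin 3) ℂ)
      (stepNumerator St w mx my) :=
    IsRelPrime.mul_left ((hX 0).isRelPrime_iff_not_dvd.2 h.1).pow_left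
      ((hX 1).isRelPrime_iff_not_dvd.2 h.2).pow_left
  intro d hd hd'
  refine hM ?_ hd'
  rw [kernelPoly_eq] at hd
  exact (dvd_sub_left (hd'.mul_left _)).1 hd

/-- Modulo the kernel polynomial, the variable `t` can be eliminated after multiplying by
a power of the step numerator. -/
lemma exists_kernelPoly_dvd_sub (St : Finset (ℤ × ℤ)) (w : ℤ × ℤ → ℂ) (mx my : ℕ)
    (P : MvPolynomial (Fin 3) ℂ) :
    ∃ (n : ℕ) (R : MvPolynomial (Fin 2) ℂ), kernelPoly St w mx my ∣
      stepNumerator St w mx my ^ n * P - MvPolynomial.rename ![0, 1] R := by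
  set Q := stepNumerator St w mx my with hQ
  induction P using MvPolynomial.induction_on with
  | C a => exact ⟨0, MvPolynomial.C a, by simp⟩
  | add P₁ P₂ h₁ h₂ =>
    obtain ⟨n₁, R₁, D₁, h₁⟩ := h₁
    obtain ⟨n₂, R₂, D₂, h₂⟩ := h₂
    obtain ⟨Q', hQ'⟩ : ∃ Q', MvPolynomial.rename ![0, 1] Q' = Q :=
      ⟨∑ p ∈ St, MvPolynomial.C (w p) * MvPolynomial.X 0 ^ (p.1 + (mx : ℤ)).toNat *
        MvPolynomial.X 1 ^ (p.2 + (my : ℤ)).toNat, by simp [hQ, stepNumerator]⟩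
    refine ⟨n₁ + n₂, Q' ^ n₂ * R₁ + Q' ^ n₁ * R₂, Q ^ n₂ * D₁ + Q ^ n₁ * D₂, ?_⟩
    simp only [map_add, map_mul, map_pow, hQ']
    linear_combination Q ^ n₂ * h₁ + Q ^ n₁ * h₂
  | mul_X P i h =>
    obtain ⟨n, R, D, h⟩ := h
    fin_cases i
    · refine ⟨n, R * MvPolynomial.X 0, D * MvPolynomial.X 0, ?_⟩
      simp
      linear_combination MvPolynomial.X 0 * h
    · refine ⟨n, R * MvPolynomial.X 1, D * MvPolynomial.X 1, ?_⟩
      simp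
      linear_combination MvPolynomial.X 1 * h
    · refine ⟨n + 1, R * (MvPolynomial.X 0 ^ mx * MvPolynomial.X 1 ^ my),
        MvPolynomial.X 0 ^ mx * MvPolynomial.X 1 ^ my * D - Q ^ n * P, ?_⟩
      have hk := kernelPoly_eq St w mx my
      simp
      linear_combination (MvPolynomial.X 0 ^ mx * MvPolynomial.X 1 ^ my) * h + Q ^ n * P * hk

lemma aeval_stepNumerator {K : Type} [Field K] [Algebra ℂ K]
    {St : Finset (ℤ × ℤ)} (w : ℤ × ℤ → ℂ) {mx my : ℕ} (hb : ExponentBounds St mx my)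
    {u v : K} (hu : u ≠ 0) (hv : v ≠ 0) (s : K) :
    MvPolynomial.aeval ![u, v, s] (stepNumerator St w mx my) =
      u ^ mx * v ^ my * stepEval St w u v := by
  rw [stepNumerator, stepEval, Finset.mul_sum, map_sum]
  refine Finset.sum_congr rfl fun p hp => ?_
  have h1 := hb.lowerX p hp
  have h2 := hb.lowerY p hp
  simp only [map_mul, map_pow, MvPolynomial.aeval_X, MvPolynomial.aeval_C]
  simp only [Matrix.cons_val_zero, Matrix.cons_val_one]
  rw [← zpow_natCast u (p.1 + (mx : ℤ)).toNat, ← zpow_natCast v (p.2 + (my : ℤ)).toNat,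
    Int.toNat_of_nonneg (by omega), Int.toNat_of_nonneg (by omega), zpow_add₀ hu, zpow_add₀ hv,
    zpow_natCast, zpow_natCast]
  ring

lemma aeval_eq_zero_iff_kernelPoly_dvd {K : Type} [Field K] [Algebra ℂ K]
    {St : Finset (ℤ × ℤ)} {w : ℤ × ℤ → ℂ} {mx my : ℕ} (hw : ∀ p ∈ St, w p ≠ 0)
    (hS : ∃ p ∈ St, p.2 ≠ 0) (hb : ExponentBounds St mx my) {u v : K}
    (h : AlgebraicIndependent ℂ ![u, v]) (P : MvPolynomial (Fin 3) ℂ) :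
    MvPolynomial.aeval ![u, v, (stepEval St w u v)⁻¹] P = 0 ↔ kernelPoly St w mx my ∣ P := by
  have hu : u ≠ 0 := h.ne_zero 0
  have hv : v ≠ 0 := h.ne_zero 1
  have hS0 := stepEval_ne_zero hw hS h
  have hQ := aeval_stepNumerator w hb hu hv (stepEval St w u v)⁻¹
  have hK : MvPolynomial.aeval ![u, v, (stepEval St w u v)⁻¹] (kernelPoly St w mx my) = 0 := by
    rw [kernelPoly_eq, map_sub, map_mul, map_mul, hQ]
    simp
    field_simp
    simp
  refine ⟨fun hP => ?_, fun ⟨D, hD⟩ => by rw [hD, map_mul, hK, zero_mul]⟩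
  obtain ⟨n, R, hR⟩ := exists_kernelPoly_dvd_sub St w mx my P
  have hR0 : R = 0 := by
    obtain ⟨D, hD⟩ := hR
    have h1 := congrArg (MvPolynomial.aeval ![u, v, (stepEval St w u v)⁻¹]) hD
    rw [map_sub, map_mul, map_mul, hP, hK, MvPolynomial.aeval_rename, mul_zero, zero_mul,
      zero_sub, neg_eq_zero] at h1
    refine (algebraicIndependent_iff.1 h) R ?_
    have e : ![u, v, (stepEval St w u v)⁻¹] ∘ ![0, 1] = ![u, v] := by
      funext i
      fin_cases i <;> rfl
    rwa [e] at h1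
  rw [hR0, map_zero, sub_zero] at hR
  exact (isRelPrime_kernelPoly hw hb).pow_right.dvd_of_dvd_mul_left hR

lemma regRange_eq_adjoin {K : Type} [Field K] [Algebra ℂ K]
    {St : Finset (ℤ × ℤ)} {w : ℤ × ℤ → ℂ} {mx my : ℕ} (hw : ∀ p ∈ St, w p ≠ 0)
    (hS : ∃ p ∈ St, p.2 ≠ 0) (hb : ExponentBounds St mx my) {x y : K}
    (h : AlgebraicIndependent ℂ ![x, y]) (s : Set (Fin 3)) :
    regRange St w x y mx my s =
      (adjoin ℂ (![x, y, (stepEval St w x y)⁻¹] '' s) : Set K) := by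
  have hmem : ∀ z, z ∈ Algebra.adjoin ℂ (![x, y, (stepEval St w x y)⁻¹] '' s) ↔
      ∃ P ∈ MvPolynomial.supported ℂ s, evalXY St w x y P = z := by
    intro z
    have : Algebra.adjoin ℂ (![x, y, (stepEval St w x y)⁻¹] '' s) =
        (MvPolynomial.supported ℂ s).map (MvPolynomial.aeval ![x, y, (stepEval St w x y)⁻¹]) := by
      rw [MvPolynomial.supported, AlgHom.map_adjoin, Set.image_image]
      simp
    rw [this, Subalgebra.mem_map]
    rfl
  ext z
  rw [SetLike.mem_coe, mem_adjoin_iff_div]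
  constructor
  · rintro ⟨A, B, hA, hB, -, rfl⟩
    exact ⟨_, (hmem _).2 ⟨A, hA, rfl⟩, _, (hmem _).2 ⟨B, hB, rfl⟩, rfl⟩
  · rintro ⟨r, hr, q, hq, rfl⟩
    obtain ⟨A, hA, rfl⟩ := (hmem _).1 hr
    obtain ⟨B, hB, rfl⟩ := (hmem _).1 hq
    have key := aeval_eq_zero_iff_kernelPoly_dvd hw hS hb h
    by_cases hB0 : evalXY St w x y B = 0
    · refine ⟨0, 1, zero_mem _, one_mem _, fun hd => ?_, by rw [hB0, div_zero]; simp [evalXY, evalPt]⟩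
      simpa using (key 1).2 hd
    · exact ⟨A, B, hA, hB, fun hd => hB0 ((key B).2 hd), rfl⟩

lemma stepEval_mem {K : Type} [Field K] [Algebra ℂ K]
    (St : Finset (ℤ × ℤ)) (w : ℤ × ℤ → ℂ) (E : IntermediateField ℂ K) {u v : K}
    (hu : u ∈ E) (hv : v ∈ E) : stepEval St w u v ∈ E :=
  sum_mem fun _ _ => mul_mem (mul_mem (E.algebraMap_mem _) (zpow_mem hu _)) (zpow_mem hv _)

lemma mem_of_inv_mem {K : Type} [Field K] [Algebra ℂ K] (E : IntermediateField ℂ K) {u : K}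
    (hu : u⁻¹ ∈ E) : u ∈ E := inv_inv u ▸ inv_mem hu

/-- (a) the evaluation of a regular fraction at a point of the orbit is
well defined, i.e. the denominator does not vanish iff it is not divisible by `K̃`;
(b) the kernel of the evaluation homomorphism `ℂ[X,Y,t] → 𝕂`, `X ↦ x, Y ↦ y,
t ↦ 1/S(x,y)`, is the principal ideal generated by `K̃`, and the induced map on
regular fractions maps `ℂ(X,Y,t)` mod `K̃` onto `k(x,y)`, `ℂ(t)` onto `k`,
`ℂ(X,t)` onto `k(x)` and `ℂ(Y,t)` onto `k(y)`. -/
theorem stmt9 {K : Type} [Field K] [Algebra ℂ K]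
    (St : Finset (ℤ × ℤ)) (w : ℤ × ℤ → ℂ) (x y : K) (mx my : ℕ)
    (hset : Setting St w x y) (hb : ExponentBounds St mx my) :
    (∀ A B : MvPolynomial (Fin 3) ℂ, IsRelPrime A B →
      ∀ a ∈ orbit St w x y,
        (evalPt St w x y B a ≠ 0 ↔ ¬ kernelPoly St w mx my ∣ B)) ∧
    RingHom.ker
        (MvPolynomial.aeval ![x, y, (stepEval St w x y)⁻¹] :
          MvPolynomial (Fin 3) ℂ →ₐ[ℂ] K) =
      Ideal.span {kernelPoly St w mx my} ∧
    regRange St w x y mx my Set.univ = (kxyF x y : Set K) ∧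
    regRange St w x y mx my ({2} : Set (Fin 3)) = (kF St w x y : Set K) ∧
    regRange St w x y mx my ({0, 2} : Set (Fin 3)) = (kxF St w x y : Set K) ∧
    regRange St w x y mx my ({1, 2} : Set (Fin 3)) = (kyF St w x y : Set K) := by
  have hw := hset.weight_ne
  have hS1 : ∃ p ∈ St, p.1 ≠ 0 := by
    obtain ⟨⟨p, hp, q, hq, h⟩, -⟩ := hset.notUniv
    by_cases h0 : p.1 = 0
    · exact ⟨q, hq, fun h1 => h (h0.trans h1.symm)⟩
    · exact ⟨p, hp, h0⟩
  have hS2 : ∃ p ∈ St, p.2 ≠ 0 := by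
    obtain ⟨-, p, hp, q, hq, h⟩ := hset.notUniv
    by_cases h0 : p.2 = 0
    · exact ⟨q, hq, fun h1 => h (h0.trans h1.symm)⟩
    · exact ⟨p, hp, h0⟩
  have hreg := regRange_eq_adjoin hw hS2 hb hset.indep
  refine ⟨fun A B _ a ha => ?_, ?_, ?_, ?_, ?_, ?_⟩
  · obtain ⟨hi, hs⟩ := orbit_algebraicIndependent hw hS1 hS2 hset.indep ha
    rw [evalPt, ← hs]
    exact (aeval_eq_zero_iff_kernelPoly_dvd hw hS2 hb hi B).not
  · ext P
    rw [RingHom.mem_ker, Ideal.mem_span_singleton]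
    exact aeval_eq_zero_iff_kernelPoly_dvd hw hS2 hb hset.indep P
  · rw [hreg, SetLike.coe_set_eq, kxyF]
    apply le_antisymm <;> rw [adjoin_le_iff]
    · have hx := subset_adjoin ℂ {x, y} (Set.mem_insert x {y})
      have hy := subset_adjoin ℂ {x, y} (Set.mem_insert_of_mem x rfl)
      rintro _ ⟨i, -, rfl⟩
      fin_cases i
      exacts [hx, hy, inv_mem (stepEval_mem St w _ hx hy)]
    · rintro _ (rfl | rfl)
      exacts [subset_adjoin ℂ _ ⟨0, trivial, rfl⟩, subset_adjoin ℂ _ ⟨1, trivial, rfl⟩]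
  · rw [hreg, SetLike.coe_set_eq, kF]
    apply le_antisymm <;> rw [adjoin_le_iff]
    · rintro _ ⟨i, rfl, rfl⟩
      exact inv_mem (subset_adjoin ℂ _ rfl)
    · rintro _ rfl
      exact mem_of_inv_mem _ (subset_adjoin ℂ _ ⟨2, rfl, rfl⟩)
  · rw [hreg, SetLike.coe_set_eq, kxF]
    apply le_antisymm <;> rw [adjoin_le_iff]
    · rintro _ ⟨i, rfl | rfl, rfl⟩
      exacts [x_mem_kxF St w x y, inv_mem (S_mem_kxF St w x y)]
    · rintro _ (rfl | rfl)
      exacts [subset_adjoin ℂ _ ⟨0, Or.inl rfl, rfl⟩,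
        mem_of_inv_mem _ (subset_adjoin ℂ _ ⟨2, Or.inr rfl, rfl⟩)]
  · rw [hreg, SetLike.coe_set_eq, kyF]
    apply le_antisymm <;> rw [adjoin_le_iff]
    · rintro _ ⟨i, rfl | rfl, rfl⟩
      exacts [y_mem_kyF St w x y, inv_mem (S_mem_kyF St w x y)]
    · rintro _ (rfl | rfl)
      exacts [subset_adjoin ℂ _ ⟨1, Or.inl rfl, rfl⟩,
        mem_of_inv_mem _ (subset_adjoin ℂ _ ⟨2, Or.inr rfl, rfl⟩)]

end QuadrantWalk
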